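/- The group A_n^× acts transitively on the set of invertible symmetric elements of A_n via a·t = a t a*; equivalently, every invertible symmetric element t ∈ A_n^sym ∩ A_n^× can be written as t = a a* for some a ∈ A_n^×. -/

import Mathlib

open Polynomial Matrix

noncomputable section

abbrev TruncPoly (K : Type) [CommRing K] (n : ℕ) := AdjoinRoot (X ^ n : K[X])

def trStar (K : Type) [CommRing K] (σ : K →+* K) (n : ℕ) :
    TruncPoly K n →+* TruncPoly K n :=
  AdjoinRoot.lift ((AdjoinRoot.of _).comp σ) (-(AdjoinRoot.root _)) (by
    have h : (AdjoinRoot.root (X ^ n : K[X])) ^ n = 0 := by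
      rw [← AdjoinRoot.mk_X, ← map_pow, AdjoinRoot.mk_self]
    rw [eval₂_pow, eval₂_X, neg_pow, h, mul_zero])

/-!
Over a ring endomorphism `φ` with an element `θ` of trace `θ + φ θ = 1`, an approximate solution `b`
of `t = b * φ b` with nilpotent error `y = t - b * φ b` improves to `b * (1 + θ * y / (b * φ b))`,
whose error is a multiple of `y ^ 2`. So `t` is of the form `a * φ a` as soon as it is so modulo
nilpotents. In `K[x]/⟨xⁿ⟩` every element is congruent to a constant modulo nilpotents. Finally, an
involution `σ ≠ id` of a field has an element of trace one, in characteristic two as well, and if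
the field is finite its norm `z * σ z` takes every fixed element as a value.
-/

theorem exists_isUnit_eq_mul_map_of_isNilpotent_sub {A : Type*} [CommRing A] (φ : A →+* A)
    {θ t b : A} (hθ : θ + φ θ = 1) (ht : φ t = t) (hb : IsUnit b)
    (hφb : φ (b * φ b) = b * φ b) (hnil : IsNilpotent (t - b * φ b)) :
    ∃ a, IsUnit a ∧ t = a * φ a := by
  obtain ⟨N, hN⟩ := hnil
  replace hN : (t - b * φ b) ^ 2 ^ N = 0 := pow_eq_zero_of_le Nat.lt_two_pow_self.le hN
  induction N generalizing b with
  | zero => exact ⟨b, hb, sub_eq_zero.1 (by simpa only [pow_zero, pow_one] using hN)⟩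
  | succ N ih =>
    obtain ⟨u, hu⟩ := (hb.mul (hb.map φ)).exists_right_inv
    set y := t - b * φ b with hy
    have hφy : φ y = y := by rw [hy, map_sub, ht, hφb]
    have hφu : φ u = u := by
      have hφu' : b * φ b * φ u = 1 := by rw [← hφb, ← map_mul, hu, map_one]
      linear_combination u * hφu' - φ u * hu
    have hφθ : φ θ = 1 - θ := by linear_combination hθ
    have hnorm : b * (1 + θ * y * u) * φ (b * (1 + θ * y * u)) =
        t + θ * (1 - θ) * u * y ^ 2 := by
      simp only [map_mul, map_add, map_one, hφy, hφu, hφθ]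
      linear_combination (y + θ * (1 - θ) * y ^ 2 * u) * hu - hy
    refine ih (b := b * (1 + θ * y * u)) (hb.mul ?_) ?_ ?_
    · have hynil : IsNilpotent y := ⟨_, hN⟩
      exact ((Commute.all _ _).isNilpotent_mul_right
        ((Commute.all _ _).isNilpotent_mul_left hynil)).isUnit_one_add
    · rw [hnorm]
      simp only [map_mul, map_add, map_sub, map_pow, map_one, ht, hφy, hφu, hφθ]
      ring
    · rw [hnorm, sub_add_cancel_left, neg_pow, mul_pow, ← pow_mul, ← pow_succ', hN, mul_zero,
        mul_zero]

theorem exists_isUnit_mul_map_eq_conj {M : Type*} [CommMonoid M] (φ : M →* M) {a b : M}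
    (ha : IsUnit a) (hb : IsUnit b) :
    ∃ c, IsUnit c ∧ b * φ b = c * (a * φ a) * φ c := by
  obtain ⟨a', haa'⟩ := ha.exists_left_inv
  refine ⟨b * a', hb.mul (IsUnit.of_mul_eq_one a haa'), ?_⟩
  calc b * φ b = b * φ b * (a' * a) * φ (a' * a) := by rw [haa', map_one, mul_one, mul_one]
    _ = b * a' * (a * φ a) * φ (b * a') := by
      simp only [map_mul]
      ac_rfl

theorem finrank_eq_of_card_eq_pow {k V : Type*} [Field k] [Fintype k] [AddCommGroup V]
    [Module k V] [Fintype V] {d : ℕ} (hcard : Fintype.card V = Fintype.card k ^ d) :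
    Module.finrank k V = d :=
  Nat.pow_right_injective Fintype.one_lt_card (Module.card_eq_pow_finrank.symm.trans hcard)

section QuadraticExtension

variable {k K : Type*} [Field k] [Field K] [Algebra k K]

theorem algebraMap_norm_eq_mul_of_finrank_eq_two [IsGalois k K] (hrank : Module.finrank k K = 2)
    {τ : Gal(K/k)} (hτ : τ ≠ 1) (z : K) : algebraMap k K (Algebra.norm k z) = z * τ z := by
  classical
  have : FiniteDimensional k K := Module.finite_of_finrank_eq_succ hrank
  have huniv : (Finset.univ : Finset Gal(K/k)) = {1, τ} := by
    refine (Finset.eq_univ_of_card _ ?_).symm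
    rw [Finset.card_pair hτ.symm, ← Nat.card_eq_fintype_card, IsGalois.card_aut_eq_finrank, hrank]
  rw [Algebra.norm_eq_prod_automorphisms, huniv, Finset.prod_pair hτ.symm, AlgEquiv.one_apply]

theorem involutive_of_finrank_eq_two (hrank : Module.finrank k K = 2) {σ : K →+* K}
    (hσ : ∀ c : k, σ (algebraMap k K c) = algebraMap k K c) : Function.Involutive σ := by
  have : FiniteDimensional k K := Module.finite_of_finrank_eq_succ hrank
  let σₐ : K →ₐ[k] K := { σ with commutes' := hσ }
  let τ : Gal(K/k) := AlgEquiv.ofBijective σₐ (Algebra.IsAlgebraic.algHom_bijective σₐ)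
  have hle : orderOf τ ≤ 2 := orderOf_le_card_univ.trans (hrank ▸ AlgEquiv.card_le)
  have hdvd : orderOf τ ∣ 2 := by
    have hpos := orderOf_pos τ
    interval_cases orderOf τ <;> norm_num
  exact AlgEquiv.congr_fun (orderOf_dvd_iff_pow_eq_one.1 hdvd)

end QuadraticExtension

section Involution

variable {K : Type*} [Field K] {σ : K →+* K}

theorem exists_add_map_eq_one (hσ : Function.Involutive σ) (hσ_ne : σ ≠ RingHom.id K) :
    ∃ θ, θ + σ θ = 1 := by
  obtain ⟨x, hx⟩ : ∃ x, x + σ x ≠ 0 := by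
    by_contra! htrace
    -- `1 + σ 1 = 0` forces characteristic two, where `x + σ x = 0` says `σ x = x`.
    have h2 : (1 : K) + 1 = 0 := by simpa only [map_one] using htrace 1
    refine hσ_ne (RingHom.ext fun x ↦ ?_)
    rw [RingHom.id_apply]
    linear_combination htrace x - x * h2
  refine ⟨x / (x + σ x), ?_⟩
  rw [map_div₀, map_add, hσ x, add_comm (σ x) x, ← add_div, div_self hx]

theorem exists_eq_mul_map_of_map_eq [Finite K] (hσ : Function.Involutive σ)
    (hσ_ne : σ ≠ RingHom.id K) {c : K} (hc : σ c = c) : ∃ z, c = z * σ z := by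
  let F : Subfield K := σ.eqLocusField (RingHom.id K)
  let τ : Gal(K/F) := AlgEquiv.ofRingEquiv (f := RingEquiv.ofBijective σ hσ.bijective) fun x ↦ x.2
  have hτ_ne : τ ≠ 1 := fun h ↦ hσ_ne (RingHom.ext (AlgEquiv.congr_fun h))
  have hτ_order : orderOf τ = 2 := orderOf_eq_prime (AlgEquiv.ext fun x ↦ hσ x) hτ_ne
  have hfixed : IntermediateField.fixedField (Subgroup.zpowers τ) = ⊥ := by
    refine eq_bot_iff.2 fun x hx ↦ IntermediateField.mem_bot.2 ⟨⟨x, ?_⟩, rfl⟩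
    exact hx ⟨τ, Subgroup.mem_zpowers τ⟩
  have hrank : Module.finrank F K = 2 := by
    rw [← hτ_order, ← Nat.card_zpowers, ← IntermediateField.finrank_fixedField_eq_card, hfixed,
      IntermediateField.finrank_bot']
  obtain ⟨z, hz⟩ := FiniteField.norm_surjective F K ⟨c, hc⟩
  refine ⟨z, ?_⟩
  calc c = algebraMap F K (Algebra.norm F z) := (congrArg (algebraMap F K) hz).symm
    _ = z * σ z := algebraMap_norm_eq_mul_of_finrank_eq_two hrank hτ_ne z

end Involution

namespace TruncPoly

theorem isNilpotent_root (K : Type) [CommRing K] (n : ℕ) :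
    IsNilpotent (AdjoinRoot.root (X ^ n : K[X])) :=
  ⟨n, by rw [← AdjoinRoot.mk_X, ← map_pow, AdjoinRoot.mk_self]⟩

theorem exists_isNilpotent_sub_of {K : Type} [CommRing K] {n : ℕ} (x : TruncPoly K n) :
    ∃ c, IsNilpotent (x - AdjoinRoot.of _ c) := by
  obtain ⟨f, rfl⟩ := AdjoinRoot.mk_surjective x
  refine ⟨f.coeff 0, ?_⟩
  have hf : AdjoinRoot.mk (X ^ n) f - AdjoinRoot.of _ (f.coeff 0) =
      AdjoinRoot.mk _ f.divX * AdjoinRoot.root _ := by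
    rw [← AdjoinRoot.mk_C, ← AdjoinRoot.mk_X, ← map_sub, ← map_mul,
      sub_eq_iff_eq_add.2 f.divX_mul_X_add.symm]
  rw [hf]
  exact (Commute.all _ _).isNilpotent_mul_left (isNilpotent_root K n)

end TruncPoly

theorem trStar_of {K : Type} [CommRing K] (σ : K →+* K) (n : ℕ) (z : K) :
    trStar K σ n (AdjoinRoot.of _ z) = AdjoinRoot.of _ (σ z) := by
  rw [trStar, AdjoinRoot.lift_of, RingHom.comp_apply]

theorem exists_isUnit_eq_mul_trStar {K : Type} [Field K] {σ : K →+* K} {θ : K}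
    (hθ : θ + σ θ = 1) (hnorm : ∀ c, σ c = c → ∃ z, c = z * σ z) {n : ℕ} {t : TruncPoly K n}
    (ht : trStar K σ n t = t) (htu : IsUnit t) :
    ∃ a, IsUnit a ∧ t = a * trStar K σ n a := by
  obtain _ | _ := subsingleton_or_nontrivial (TruncPoly K n)
  · exact ⟨1, isUnit_one, Subsingleton.elim _ _⟩
  let ι : K →+* TruncPoly K n := AdjoinRoot.of _
  have hι (z : K) : trStar K σ n (ι z) = ι (σ z) := trStar_of σ n z
  obtain ⟨c, hc⟩ : ∃ c, IsNilpotent (t - ι c) := TruncPoly.exists_isNilpotent_sub_of t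
  have hσc : σ c = c := by
    have hdiff : IsNilpotent (ι (c - σ c)) := by
      have := (Commute.all _ _).isNilpotent_sub (hc.map (trStar K σ n)) hc
      rwa [map_sub, ht, hι, sub_sub_sub_cancel_left, ← map_sub] at this
    exact (sub_eq_zero.1 ((IsNilpotent.map_iff ι.injective).1 hdiff).eq_zero).symm
  have hc0 : c ≠ 0 := by
    rintro rfl
    exact htu.not_isNilpotent (by simpa only [map_zero, sub_zero] using hc)
  obtain ⟨z, rfl⟩ := hnorm c hσc
  have hz : ι z * trStar K σ n (ι z) = ι (z * σ z) := by rw [hι, map_mul]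
  refine exists_isUnit_eq_mul_map_of_isNilpotent_sub (trStar K σ n) (θ := ι θ) (b := ι z)
    ?_ ht ((left_ne_zero_of_mul hc0).isUnit.map ι) ?_ ?_
  · rw [hι, ← map_add, hθ, map_one]
  · rw [hz, hι, hσc]
  · rwa [hz]

theorem transitive_on_sym_units_general {K : Type} [Field K] [Finite K] {σ : K →+* K}
    (hσ : Function.Involutive σ) (hσ_ne : σ ≠ RingHom.id K) (n : ℕ) :
    (∀ t₁ t₂ : TruncPoly K n,
        trStar K σ n t₁ = t₁ → IsUnit t₁ → trStar K σ n t₂ = t₂ → IsUnit t₂ →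
        ∃ a : TruncPoly K n, IsUnit a ∧ t₂ = a * t₁ * trStar K σ n a) ∧
    (∀ t₀ : TruncPoly K n, trStar K σ n t₀ = t₀ → IsUnit t₀ →
        ∃ a : TruncPoly K n, IsUnit a ∧ t₀ = a * trStar K σ n a) := by
  obtain ⟨θ, hθ⟩ := exists_add_map_eq_one hσ hσ_ne
  have hfactor (t : TruncPoly K n) (ht : trStar K σ n t = t) (htu : IsUnit t) :
      ∃ a, IsUnit a ∧ t = a * trStar K σ n a :=
    exists_isUnit_eq_mul_trStar hθ (fun _ ↦ exists_eq_mul_map_of_map_eq hσ hσ_ne) ht htu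
  refine ⟨fun t₁ t₂ ht₁ hu₁ ht₂ hu₂ ↦ ?_, hfactor⟩
  obtain ⟨a, ha, rfl⟩ := hfactor t₁ ht₁ hu₁
  obtain ⟨b, hb, rfl⟩ := hfactor t₂ ht₂ hu₂
  exact exists_isUnit_mul_map_eq_conj (trStar K σ n : TruncPoly K n →* TruncPoly K n) ha hb

/-- `A_nˣ` acts transitively on invertible symmetric elements via
`a·t = a t a*`; equivalently every invertible symmetric `t` is of the form `a a*`. -/
theorem transitive_on_sym_units
    (p t q : ℕ) (hp : p.Prime) (hp2 : Odd p) (ht : 0 < t) (hq : q = p ^ t)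
    (k K : Type) [Field k] [Fintype k] [Field K] [Fintype K] [Algebra k K]
    (hcardk : Fintype.card k = q) (hcardK : Fintype.card K = q ^ 2)
    (Δ : K) (hΔ : Δ ∉ Set.range (algebraMap k K))
    (hΔ2 : Δ ^ 2 ∈ Set.range (algebraMap k K))
    (σ : K →+* K) (hσk : ∀ c : k, σ (algebraMap k K c) = algebraMap k K c)
    (hσne : σ ≠ RingHom.id K) (hσΔ : σ Δ = -Δ)
    (n : ℕ) (hn : 0 < n) :
    (∀ t₁ t₂ : TruncPoly K n,
        trStar K σ n t₁ = t₁ → IsUnit t₁ → trStar K σ n t₂ = t₂ → IsUnit t₂ →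
        ∃ a : TruncPoly K n, IsUnit a ∧ t₂ = a * t₁ * trStar K σ n a) ∧
    (∀ t₀ : TruncPoly K n, trStar K σ n t₀ = t₀ → IsUnit t₀ →
        ∃ a : TruncPoly K n, IsUnit a ∧ t₀ = a * trStar K σ n a) := by
  have hrank : Module.finrank k K = 2 := finrank_eq_of_card_eq_pow (by rw [hcardK, hcardk])
  exact transitive_on_sym_units_general (involutive_of_finrank_eq_two hrank hσk) hσne n
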